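/- For every continuous injective map f : S³ → ℝ⁴ and every pair of metrics ρ₁, ρ₂ on ℝ⁴, each inducing the standard Euclidean topology of ℝ⁴, there exist five distinct points x₀, x₁, x₂, x₃, x₄ ∈ S³ such that, writing yᵢ = f(xᵢ): ρ₁(y₀,y₁) = ρ₁(y₁,y₂) = ρ₁(y₂,y₃) = ρ₁(y₃,y₄) = ρ₁(y₄,y₀) and ρ₂(y₀,y₂) = ρ₂(y₂,y₄) = ρ₂(y₄,y₁) = ρ₂(y₁,y₃) = ρ₂(y₃,y₀). -/

import Mathlib

/-- `ρ` is a metric on `E` that induces the (given) standard topology of `E`. -/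
def IsMetricEquivToStd {E : Type*} [TopologicalSpace E] (ρ : E → E → ℝ) : Prop :=
  (∀ x y, ρ x y = ρ y x) ∧
  (∀ x y, ρ x y = 0 ↔ x = y) ∧
  (∀ x y z, ρ x z ≤ ρ x y + ρ y z) ∧
  (∀ s : Set E, IsOpen s ↔ ∀ x ∈ s, ∃ ε > 0, {y | ρ x y < ε} ⊆ s)

/-!
Restrict to a copy of `E = ℝ³` in the sphere and consider cyclic quintuples of points of `E`. The
sides and the diagonals of a pentagon are the steps `1` and `2` in `ℤ/5`, so a quintuple is as
wanted if all rotations of it give the same first side and the same first diagonal. If a side or a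
diagonal degenerates, then so do all those of its kind and the quintuple is constant. Hence it
suffices to find a non-constant quintuple at which the deviations of the lengths from their mean
vanish: two equivariant families of five functions with sum zero.

This is a Borsuk–Ulam problem for `ℤ/p`. If `m` such families had no common zero on a compact
invariant set, labelling each point equivariantly by a family and an index at which that family is
large would send small simplices to the join of `m` boundaries of `(p - 1)`-simplices. This is a
free complex of dimension `m (p - 1) - 1`, whereas the complement of the constants in `E ^ p`
contains an iterated join of generic orbits that carries the generator of the homology of `ℤ/p` in
degree `m (p - 1)`, as soon as `m < dim E`. The contradiction is obtained by pairing that class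
with the cocycles of the periodic resolution of `ℤ/p`, which can be solved for cochain by cochain
over any free complex.
-/

/-- A cochain on ordered simplices with vertices in `α` and coefficients in `R`. Simplices are
lists, so repeated vertices are allowed and the empty simplex makes the complex augmented. -/
abbrev ListCochain (R α : Type*) := List α → R

namespace ListCochain

section Operators

variable {R : Type*} [Ring R] {α β : Type*}

/-- Pull-back of a cochain along a map of vertices. -/
def pullback (f : α → β) : ListCochain R β →ₗ[R] ListCochain R α :=
  LinearMap.funLeft R R (List.map f)

/-- Contraction of a cochain with the vertex `x`. -/
def contract (x : α) : ListCochain R α →ₗ[R] ListCochain R α :=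
  LinearMap.funLeft R R (List.cons x)

/-- The value of the simplicial coboundary of a cochain at a given ordered simplex. -/
def coboundaryAt : List α → (ListCochain R α →ₗ[R] R)
  | [] => 0
  | x :: l => LinearMap.proj l - coboundaryAt l ∘ₗ contract x

/-- The augmented simplicial coboundary. Its value at `l` is the alternating sum over the faces
of `l`, so a cochain supported on lists of length `k` has simplicial degree `k - 1`. -/
def coboundary : ListCochain R α →ₗ[R] ListCochain R α :=
  LinearMap.pi coboundaryAt

/-- The value at a given ordered simplex of the prism operator between `f` and `g`. -/
def prismAt (f g : α → β) : List α → (ListCochain R β →ₗ[R] R)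
  | [] => 0
  | x :: l => LinearMap.proj (f x :: g x :: l.map g) - prismAt f g l ∘ₗ contract (f x)

/-- The prism operator, a cochain homotopy between `pullback f` and `pullback g`. -/
def prism (f g : α → β) : ListCochain R β →ₗ[R] ListCochain R α :=
  LinearMap.pi (prismAt f g)

@[simp] lemma pullback_apply (f : α → β) (b : ListCochain R β) (l : List α) :
    pullback f b l = b (l.map f) := rfl

@[simp] lemma contract_apply (x : α) (b : ListCochain R α) (l : List α) :
    contract x b l = b (x :: l) := rfl

@[simp] lemma coboundary_nil (b : ListCochain R α) : coboundary b [] = 0 := rfl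

@[simp] lemma coboundary_cons (b : ListCochain R α) (x : α) (l : List α) :
    coboundary b (x :: l) = b l - coboundary (contract x b) l := rfl

@[simp] lemma prism_nil (f g : α → β) (b : ListCochain R β) : prism f g b [] = 0 := rfl

@[simp] lemma prism_cons (f g : α → β) (b : ListCochain R β) (x : α) (l : List α) :
    prism f g b (x :: l) = b (f x :: g x :: l.map g) - prism f g (contract (f x) b) l := rfl

lemma contract_coboundary (x : α) (b : ListCochain R α) :
    contract x (coboundary b) = b - coboundary (contract x b) := rfl

lemma contract_pullback (f : α → β) (x : α) (b : ListCochain R β) :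
    contract x (pullback f b) = pullback f (contract (f x) b) := rfl

lemma contract_prism (f g : α → β) (x : α) (b : ListCochain R β) :
    contract x (prism f g b) =
      pullback g (contract (g x) (contract (f x) b)) - prism f g (contract (f x) b) := rfl

lemma pullback_coboundary (f : α → β) (b : ListCochain R β) :
    pullback f (coboundary b) = coboundary (pullback f b) := by
  funext l
  induction l generalizing b with
  | nil => rfl
  | cons x l ih =>
    have ih := ih (contract (f x) b)
    rw [pullback_apply] at ih
    rw [pullback_apply, List.map_cons, coboundary_cons, ih, coboundary_cons, pullback_apply,
      contract_pullback]

lemma coboundary_coboundary (b : ListCochain R α) : coboundary (coboundary b) = 0 := by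
  funext l
  induction l generalizing b with
  | nil => rfl
  | cons x l ih =>
    rw [coboundary_cons, contract_coboundary, map_sub, Pi.sub_apply, ih, Pi.zero_apply, sub_zero,
      sub_self, Pi.zero_apply]

lemma prism_coboundary (f g : α → β) (b : ListCochain R β) :
    prism f g (coboundary b) + coboundary (prism f g b) = pullback g b - pullback f b := by
  funext l
  induction l generalizing b with
  | nil => simp
  | cons x l ih =>
    have ih := ih (contract (f x) b)
    have hg := congrFun (pullback_coboundary g (contract (g x) (contract (f x) b))) l
    simp only [Pi.add_apply, Pi.sub_apply, pullback_apply, contract_apply] at ih hg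
    simp only [Pi.add_apply, Pi.sub_apply, pullback_apply, List.map_cons, prism_cons,
      coboundary_cons, contract_coboundary, contract_prism, map_sub, contract_apply, ← hg,
      eq_sub_of_add_eq ih]
    abel

lemma coboundary_eq_zero_of_sublist {b : ListCochain R α} {l : List α}
    (h : ∀ l' : List α, l'.Sublist l → b l' = 0) : coboundary b l = 0 := by
  induction l generalizing b with
  | nil => rfl
  | cons x l ih =>
    rw [coboundary_cons, h l (List.sublist_cons_self x l),
      ih (b := contract x b) fun l' hl' => h (x :: l') (hl'.cons_cons x), sub_zero]

lemma prism_eq_zero {f g : α → β} {b : ListCochain R β} {l : List α}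
    (h : ∀ l' : List β, (∀ y ∈ l', ∃ x ∈ l, y = f x ∨ y = g x) → b l' = 0) :
    prism f g b l = 0 := by
  induction l generalizing b with
  | nil => rfl
  | cons x l ih =>
    rw [prism_cons, h, ih, sub_zero]
    · intro l' hl'
      refine h (f x :: l') (List.forall_mem_cons.2 ⟨⟨x, by simp⟩, fun y hy => ?_⟩)
      obtain ⟨z, hz, hyz⟩ := hl' y hy
      exact ⟨z, List.mem_cons_of_mem x hz, hyz⟩
    · refine List.forall_mem_cons.2 ⟨⟨x, by simp⟩, List.forall_mem_cons.2 ⟨⟨x, by simp⟩, ?_⟩⟩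
      rintro _ hy
      obtain ⟨z, hz, rfl⟩ := List.mem_map.1 hy
      exact ⟨z, List.mem_cons_of_mem x hz, Or.inr rfl⟩

/-- The cochain contraction onto the vertex `v` along the maps `s 0, …, s m`, which are meant to
start at the identity and to end at the constant `v`. -/
def coneHomotopy (v : α) (s : ℕ → α → α) (m : ℕ) : ListCochain R α →ₗ[R] ListCochain R α :=
  pullback (fun _ => v) ∘ₗ contract v - ∑ t ∈ Finset.range m, prism (s t) (s (t + 1))

lemma coneHomotopy_apply (v : α) (s : ℕ → α → α) (m : ℕ) (b : ListCochain R α) :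
    coneHomotopy v s m b =
      pullback (fun _ => v) (contract v b) - ∑ t ∈ Finset.range m, prism (s t) (s (t + 1)) b := by
  simp only [coneHomotopy, LinearMap.sub_apply, LinearMap.comp_apply, LinearMap.sum_apply]

lemma coneHomotopy_coboundary {v : α} {s : ℕ → α → α} {m : ℕ} (h0 : s 0 = id)
    (hm : s m = fun _ => v) (b : ListCochain R α) :
    coneHomotopy v s m (coboundary b) + coboundary (coneHomotopy v s m b) = b := by
  have hprism : ∑ t ∈ Finset.range m, prism (s t) (s (t + 1)) (coboundary b) +
      coboundary (∑ t ∈ Finset.range m, prism (s t) (s (t + 1)) b) =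
      pullback (fun _ => v) b - b := by
    have hid : pullback id b = b := funext fun l => by simp
    rw [map_sum, ← Finset.sum_add_distrib]
    simp only [prism_coboundary]
    rw [Finset.sum_range_sub fun t => pullback (s t) b, hm, h0, hid]
  rw [coneHomotopy_apply, coneHomotopy_apply, contract_coboundary, map_sub, map_sub,
    ← pullback_coboundary, eq_sub_of_add_eq hprism]
  abel

lemma coneHomotopy_eq_zero {v : α} {s : ℕ → α → α} {m : ℕ} {b : ListCochain R α} {l : List α}
    (hv : b (v :: l.map fun _ => v) = 0)
    (hs : ∀ t < m, ∀ l' : List α, (∀ y ∈ l', ∃ x ∈ l, y = s t x ∨ y = s (t + 1) x) → b l' = 0) :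
    coneHomotopy v s m b l = 0 := by
  have hprism : ∑ t ∈ Finset.range m, prism (s t) (s (t + 1)) b l = 0 :=
    Finset.sum_eq_zero fun t ht => prism_eq_zero (hs t (Finset.mem_range.1 ht))
  rw [coneHomotopy_apply, Pi.sub_apply, Finset.sum_apply, hprism, pullback_apply, contract_apply,
    hv, sub_zero]

end Operators

section Alternating

variable {R : Type*} [Ring R] {α : Type*} {b : ListCochain R α}

/-- A cochain is alternating if swapping adjacent vertices changes its sign and it vanishes when
adjacent vertices agree. The second condition is not automatic in characteristic two. -/
structure IsAlternating (b : ListCochain R α) : Prop where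
  swap : ∀ l₁ l₂ x y, b (l₁ ++ x :: y :: l₂) = -b (l₁ ++ y :: x :: l₂)
  eq_zero : ∀ l₁ l₂ x, b (l₁ ++ x :: x :: l₂) = 0

/-- A cochain is homogeneous of order `k` if it vanishes off the simplices with `k` vertices. -/
def IsHomogeneous (k : ℕ) (b : ListCochain R α) : Prop := ∀ l, l.length ≠ k → b l = 0

lemma IsAlternating.contract (hb : IsAlternating b) (x : α) : IsAlternating (contract x b) where
  swap l₁ := hb.swap (x :: l₁)
  eq_zero l₁ := hb.eq_zero (x :: l₁)

lemma IsAlternating.contract_contract_swap (hb : IsAlternating b) (x y : α) :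
    ListCochain.contract x (ListCochain.contract y b) =
      -ListCochain.contract y (ListCochain.contract x b) :=
  funext fun l => hb.swap [] l y x

lemma IsAlternating.contract_contract_self (hb : IsAlternating b) (x : α) :
    ListCochain.contract x (ListCochain.contract x b) = 0 :=
  funext fun l => hb.eq_zero [] l x

lemma IsAlternating.coboundary (hb : IsAlternating b) : IsAlternating (coboundary b) where
  swap l₁ l₂ x y := by
    induction l₁ generalizing b with
    | nil =>
      simp only [List.nil_append, coboundary_cons, hb.contract_contract_swap y x, map_neg,
        Pi.neg_apply, contract_apply]
      abel
    | cons z l₁ ih =>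
      simp only [List.cons_append, coboundary_cons, ih (hb.contract z), hb.swap l₁ l₂ x y]
      abel
  eq_zero l₁ l₂ x := by
    induction l₁ generalizing b with
    | nil =>
      simp only [List.nil_append, coboundary_cons, hb.contract_contract_self x, map_zero,
        Pi.zero_apply, contract_apply, sub_zero, sub_self]
    | cons z l₁ ih =>
      rw [List.cons_append, coboundary_cons, ih (hb.contract z), hb.eq_zero, sub_zero]

lemma IsAlternating.eq_or_eq_neg_of_perm (hb : IsAlternating b) {l l' : List α}
    (h : l.Perm l') : b l = b l' ∨ b l = -b l' := by
  induction h generalizing b with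
  | nil => exact Or.inl rfl
  | cons x _ ih => exact ih (hb.contract x)
  | swap x y l => exact Or.inr (hb.swap [] l y x)
  | trans _ _ ih₁ ih₂ =>
    rcases ih₁ hb with h₁ | h₁ <;> rcases ih₂ hb with h₂ | h₂ <;> simp [h₁, h₂]

lemma IsAlternating.eq_zero_of_not_nodup (hb : IsAlternating b) {l : List α} (hl : ¬ l.Nodup) :
    b l = 0 := by
  obtain ⟨x, hx⟩ : ∃ x, List.Duplicate x l := by
    simpa only [List.nodup_iff_forall_not_duplicate, not_forall, not_not] using hl
  obtain ⟨l', hl'⟩ := (List.duplicate_iff_sublist.1 hx).exists_perm_append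
  have hxx : b ([x, x] ++ l') = 0 := hb.eq_zero [] l' x
  rcases hb.eq_or_eq_neg_of_perm hl' with h | h
  · rw [h, hxx]
  · rw [h, hxx, neg_zero]

lemma IsHomogeneous.coboundary {k : ℕ} (hb : IsHomogeneous k b) :
    IsHomogeneous (k + 1) (coboundary b) := by
  intro l hl
  induction l generalizing b k with
  | nil => rfl
  | cons x l ih =>
    rw [List.length_cons, ne_eq, add_left_inj] at hl
    rw [coboundary_cons, hb l hl, zero_sub, neg_eq_zero]
    cases k with
    | zero =>
      have hzero : contract x b = 0 := funext fun l' => hb (x :: l') (by simp)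
      rw [hzero, map_zero, Pi.zero_apply]
    | succ k => exact ih (fun l' hl' => hb (x :: l') (by simpa using hl')) hl

end Alternating

end ListCochain

section Resolution

open ListCochain

variable {R : Type*} [Ring R] {α β : Type*} {n : ℕ} {r : α → α}

/-- The operators in the periodic resolution of `ℤ/n`, acting on cochains: `r - 1` in even degree
and the norm `1 + r + ⋯ + r ^ (n - 1)` in odd degree. -/
noncomputable def resolutionMap (n : ℕ) (r : α → α) (k : ℕ) : Module.End R (ListCochain R α) :=
  if Even k then pullback r - 1
  else ∑ j ∈ Finset.range n, (pullback r : Module.End R (ListCochain R α)) ^ j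

lemma pullback_pow (r : α → α) (j : ℕ) :
    (pullback r : Module.End R (ListCochain R α)) ^ j = pullback r^[j] := by
  induction j with
  | zero => ext b l; simp
  | succ j ih =>
    ext b l
    rw [pow_succ, ih, Module.End.mul_apply, pullback_apply, pullback_apply, pullback_apply,
      List.map_map, ← Function.iterate_succ']

lemma resolutionMap_even_apply {k : ℕ} (hk : Even k) (b : ListCochain R α) (l : List α) :
    resolutionMap n r k b l = b (l.map r) - b l := by
  simp [resolutionMap, hk]

lemma resolutionMap_odd_apply {k : ℕ} (hk : Odd k) (b : ListCochain R α) (l : List α) :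
    resolutionMap n r k b l = ∑ j ∈ Finset.range n, b (l.map r^[j]) := by
  simp [resolutionMap, Nat.not_even_iff_odd.2 hk, pullback_pow]

lemma resolutionMap_add_two (k : ℕ) :
    (resolutionMap n r (k + 2) : Module.End R (ListCochain R α)) = resolutionMap n r k := by
  simp [resolutionMap, Nat.even_add_one]

lemma resolutionMap_mul_resolutionMap_succ (hr : r^[n] = id) (k : ℕ) :
    (resolutionMap n r k * resolutionMap n r (k + 1) : Module.End R (ListCochain R α)) = 0 := by
  have hpow : (pullback r : Module.End R (ListCochain R α)) ^ n = 1 := by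
    rw [pullback_pow, hr]
    ext b l
    simp
  by_cases hk : Even k
  · rw [resolutionMap, resolutionMap, if_pos hk, if_neg (by simpa [Nat.even_add_one] using hk),
      mul_geom_sum, hpow, sub_self]
  · rw [resolutionMap, resolutionMap, if_neg hk, if_pos (by simpa [Nat.even_add_one] using hk),
      geom_sum_mul, hpow, sub_self]

lemma resolutionMap_coboundary (k : ℕ) (b : ListCochain R α) :
    resolutionMap n r k (coboundary b) = coboundary (resolutionMap n r k b) := by
  unfold resolutionMap
  split_ifs
  · simp [pullback_coboundary]
  · simp [pullback_coboundary, pullback_pow]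

lemma resolutionMap_eq_zero {b : ListCochain R α} {l : List α} (h : ∀ j, b (l.map r^[j]) = 0)
    (k : ℕ) : resolutionMap n r k b l = 0 := by
  rcases Nat.even_or_odd k with hk | hk
  · have h0 := h 0
    have h1 := h 1
    rw [Function.iterate_zero, List.map_id] at h0
    rw [resolutionMap_even_apply hk, h0, sub_zero]
    exact h1
  · rw [resolutionMap_odd_apply hk, Finset.sum_eq_zero fun j _ => h j]

lemma resolutionMap_pullback {g : β → β} {φ : β → α} {l : List β}
    (h : ∀ j, (l.map g^[j]).map φ = (l.map φ).map r^[j]) (k : ℕ) (b : ListCochain R α) :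
    resolutionMap n g k (pullback φ b) l = resolutionMap n r k b (l.map φ) := by
  rcases Nat.even_or_odd k with hk | hk
  · have h1 := h 1
    rw [Function.iterate_one, Function.iterate_one] at h1
    rw [resolutionMap_even_apply hk, resolutionMap_even_apply hk, pullback_apply, pullback_apply,
      h1]
  · simp only [resolutionMap_odd_apply hk, pullback_apply, h]

variable (R n r) in
/-- The set `S` of ordered simplices carries a `k`-chain representing the generator of the `k`-th
homology of `ℤ/n` with coefficients in `R`. Chains are encoded as linear functionals on cochains,
and the generator is detected by pairing with the classes of the periodic resolution. -/
def CarriesClass (k : ℕ) (S : Set (List α)) : Prop :=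
  ∃ c : ListCochain R α →ₗ[R] R,
    (∀ b, (∀ l ∈ S, b l = 0) → c b = 0) ∧
    (∀ b, c (resolutionMap n r k (coboundary b)) = 0) ∧
    ∀ b : ℕ → ListCochain R α, b 0 [] = 1 →
      (∀ j < k, ∀ l ∈ S, resolutionMap n r j (b (j + 1)) l = coboundary (b j) l) →
      c (coboundary (b k)) = 1

lemma carriesClass_zero {S : Set (List α)} {x : α} (hx : [x] ∈ S) : CarriesClass R n r 0 S := by
  refine ⟨LinearMap.proj [x], fun b hb => hb [x] hx, fun b => ?_, fun b hb _ => ?_⟩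
  · simp [resolutionMap_even_apply Even.zero]
  · simpa using hb

lemma CarriesClass.succ {k : ℕ} {S S' : Set (List α)} (h : CarriesClass R n r k S)
    (hr : r^[n] = id) (hSS' : S ⊆ S') (hrS : ∀ l ∈ S, l.map r ∈ S)
    (K : Module.End R (ListCochain R α)) (hK : ∀ b, K (coboundary b) + coboundary (K b) = b)
    (hKS : ∀ b, (∀ l ∈ S', b l = 0) → ∀ l ∈ S, K b l = 0) : CarriesClass R n r (k + 1) S' := by
  obtain ⟨c, hc, hcycle, hclass⟩ := h
  have hfill (b : ListCochain R α) :
      c (resolutionMap n r k (K (coboundary b))) = c (resolutionMap n r k b) := by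
    rw [eq_sub_of_add_eq (hK b), map_sub, map_sub, hcycle, sub_zero]
  have hrS' (j : ℕ) : ∀ l ∈ S, l.map r^[j] ∈ S := by
    induction j with
    | zero => simp
    | succ j ih =>
      intro l hl
      rw [Function.iterate_succ, ← List.map_map]
      exact ih _ (hrS l hl)
  refine ⟨c ∘ₗ resolutionMap n r k ∘ₗ K, fun b hb => ?_, fun b => ?_, fun b hb0 hb => ?_⟩
  · exact hc _ fun l hl => resolutionMap_eq_zero (fun j => hKS b hb _ (hrS' j l hl)) k
  · rw [resolutionMap_coboundary, LinearMap.comp_apply, LinearMap.comp_apply, hfill,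
      ← Module.End.mul_apply, resolutionMap_mul_resolutionMap_succ hr, LinearMap.zero_apply,
      map_zero]
  · rw [LinearMap.comp_apply, LinearMap.comp_apply, hfill,
      ← hclass b hb0 fun j hj l hl => hb j (by lia) l (hSS' hl), ← sub_eq_zero, ← map_sub]
    refine hc _ fun l hl => ?_
    rw [Pi.sub_apply, hb k (by lia) l (hSS' hl), sub_self]

end Resolution

section FreeComplex

open ListCochain

variable {R : Type*} [Ring R] {α : Type*} [DecidableEq α] {n : ℕ} {r : α → α}
  {G : Set (Finset α)} {τ : Finset α → ZMod n}

/-- A simplicial complex `G` with an action of `ℤ/n` generated by `r` and an equivariant map `τ` to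
`ℤ/n` on its nonempty simplices, which makes the action on these simplices free. -/
structure FreeComplex (r : α → α) (G : Set (Finset α)) (τ : Finset α → ZMod n) : Prop where
  image_mem : ∀ S ∈ G, S.image r ∈ G
  subset_mem : ∀ S ∈ G, ∀ T ⊆ S, T ∈ G
  equivariant : ∀ S ∈ G, S.Nonempty → τ (S.image r) = τ S + 1

lemma sum_range_val_add_one {M : Type*} [AddCommMonoid M] [NeZero n] {A : ℕ → M}
    (hA : ∑ j ∈ Finset.range n, A j = 0) (s : ZMod n) :
    ∑ j ∈ Finset.range (s + 1).val, A j = ∑ j ∈ Finset.range s.val, A (j + 1) + A 0 := by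
  rw [← Finset.sum_range_succ']
  rcases (Nat.succ_le_of_lt s.val_lt).eq_or_lt with hs | hs
  · have hzero : s + 1 = 0 := by
      rw [← ZMod.natCast_zmod_val s, ← Nat.cast_succ, hs, ZMod.natCast_self]
    rw [← Nat.succ_eq_add_one, hs, hA, hzero, ZMod.val_zero, Finset.sum_range_zero]
  · have hval : (s + 1).val = s.val + 1 := by
      conv_lhs => rw [← ZMod.natCast_zmod_val s, ← Nat.cast_succ]
      exact ZMod.val_cast_of_lt hs
    rw [hval]

lemma toFinset_map {β : Type*} [DecidableEq β] (f : α → β) (l : List α) :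
    (l.map f).toFinset = l.toFinset.image f := by
  ext
  simp

namespace FreeComplex

lemma toFinset_map_iterate (h : FreeComplex r G τ) {l : List α} (hl : l.toFinset ∈ G)
    (hne : l ≠ []) (j : ℕ) :
    (l.map r^[j]).toFinset ∈ G ∧ τ (l.map r^[j]).toFinset = τ l.toFinset + j := by
  induction j with
  | zero => simpa using hl
  | succ j ih =>
    have hne' : (l.map r^[j]).toFinset.Nonempty := by simpa using hne
    rw [Function.iterate_succ', ← List.map_map, toFinset_map, Nat.cast_succ, ← add_assoc,
      h.equivariant _ ih.1 hne', ih.2]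
    exact ⟨h.image_mem _ ih.1, rfl⟩

lemma exists_resolutionMap_odd_eq [NeZero n] (h : FreeComplex r G τ) {k m : ℕ} (hk : Odd k)
    {a : ListCochain R α} (ha : IsAlternating a) (ham : IsHomogeneous (m + 1) a)
    (hker : ∀ l : List α, l.toFinset ∈ G → resolutionMap n r (k + 1) a l = 0) :
    ∃ b, IsAlternating b ∧ IsHomogeneous (m + 1) b ∧
      ∀ l : List α, l.toFinset ∈ G → resolutionMap n r k b l = a l := by
  -- An invariant cochain is the norm of its restriction to the fundamental domain `τ = 0`.
  refine ⟨fun l => if τ l.toFinset = 0 then a l else 0, ⟨fun l₁ l₂ x y => ?_, fun l₁ l₂ x => ?_⟩,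
    fun l hl => ?_, fun l hl => ?_⟩
  · have hτ : (l₁ ++ x :: y :: l₂).toFinset = (l₁ ++ y :: x :: l₂).toFinset :=
      List.toFinset_eq_of_perm _ _ ((List.Perm.swap y x l₂).append_left l₁)
    simp only [hτ, ha.swap l₁ l₂ x y]
    split_ifs <;> simp
  · simp only [ha.eq_zero, ite_self]
  · simp only [ham l hl, ite_self]
  rw [resolutionMap_odd_apply hk]
  rcases eq_or_ne l [] with rfl | hne
  · simp [ham [] (by simp)]
  have hconst (j : ℕ) : a (l.map r^[j]) = a l := by
    induction j with
    | zero => simp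
    | succ j ih =>
      have hj := hker _ (h.toFinset_map_iterate hl hne j).1
      rwa [resolutionMap_even_apply hk.add_one, sub_eq_zero, List.map_map,
        ← Function.iterate_succ', ih] at hj
  simp only [(h.toFinset_map_iterate hl hne _).2, hconst]
  rw [Finset.sum_eq_single (-τ l.toFinset).val]
  · simp
  · intro j hj hne
    refine if_neg fun h0 => hne ?_
    rw [← eq_neg_of_add_eq_zero_right h0, ZMod.val_cast_of_lt (Finset.mem_range.1 hj)]
  · exact fun hmem => (hmem (Finset.mem_range.2 (ZMod.val_lt _))).elim

lemma exists_resolutionMap_even_eq [NeZero n] (h : FreeComplex r G τ) {k m : ℕ} (hk : Even k)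
    {a : ListCochain R α} (ha : IsAlternating a) (ham : IsHomogeneous (m + 1) a)
    (hker : ∀ l : List α, l.toFinset ∈ G → resolutionMap n r (k + 1) a l = 0) :
    ∃ b, IsAlternating b ∧ IsHomogeneous (m + 1) b ∧
      ∀ l : List α, l.toFinset ∈ G → resolutionMap n r k b l = a l := by
  -- A cochain of norm zero is a difference of its partial sums, cut off along each orbit by `τ`.
  refine ⟨fun l => -∑ j ∈ Finset.range (-τ l.toFinset).val, a (l.map r^[j]),
    ⟨fun l₁ l₂ x y => ?_, fun l₁ l₂ x => ?_⟩, fun l hl => ?_, fun l hl => ?_⟩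
  · have hτ : (l₁ ++ x :: y :: l₂).toFinset = (l₁ ++ y :: x :: l₂).toFinset :=
      List.toFinset_eq_of_perm _ _ ((List.Perm.swap y x l₂).append_left l₁)
    simp only [hτ, List.map_append, List.map_cons, ha.swap _ _ (r^[_] x), Finset.sum_neg_distrib]
  · simp only [List.map_append, List.map_cons, ha.eq_zero, Finset.sum_const_zero, neg_zero]
  · simp only [ham (l.map _) (by simpa using hl), Finset.sum_const_zero, neg_zero]
  rw [resolutionMap_even_apply hk]
  rcases eq_or_ne l [] with rfl | hne
  · simp [ham [] (by simp)]
  have hnorm := hker l hl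
  rw [resolutionMap_odd_apply hk.add_one] at hnorm
  have hsum := sum_range_val_add_one hnorm (-τ (l.map r).toFinset)
  have hτ : -τ (l.map r).toFinset + 1 = -τ l.toFinset := by
    rw [toFinset_map, h.equivariant _ hl (by simpa using hne)]
    ring
  rw [hτ, Function.iterate_zero, List.map_id] at hsum
  simp only [hsum, List.map_map, ← Function.iterate_succ]
  abel

/-- The induction invariant of the construction: a homogeneous alternating cochain whose coboundary
can be resolved further. -/
structure IsResolvable (n : ℕ) (r : α → α) (G : Set (Finset α)) (k : ℕ) (b : ListCochain R α) :
    Prop where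
  isAlternating : IsAlternating b
  isHomogeneous : IsHomogeneous k b
  resolutionMap_coboundary_eq_zero :
    ∀ l : List α, l.toFinset ∈ G → resolutionMap n r (k + 1) (coboundary b) l = 0

lemma isResolvable_zero (hR : (n : R) = 0) :
    IsResolvable n r G 0 (fun l => if l = [] then (1 : R) else 0) where
  isAlternating := ⟨fun l₁ l₂ x y => by simp, fun l₁ l₂ x => by simp⟩
  isHomogeneous l hl := if_neg fun h0 => hl (by simp [h0])
  resolutionMap_coboundary_eq_zero l _ := by
    have hnorm : resolutionMap n r (0 + 1) (fun l => if l = [] then (1 : R) else 0) = 0 := by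
      funext l
      simp [resolutionMap_odd_apply odd_one, hR]
    rw [resolutionMap_coboundary, hnorm, map_zero, Pi.zero_apply]

lemma exists_isResolvable_succ [NeZero n] (h : FreeComplex r G τ) {k : ℕ} {b : ListCochain R α}
    (hb : IsResolvable n r G k b) :
    ∃ b' : ListCochain R α, IsResolvable n r G (k + 1) b' ∧
      ∀ l : List α, l.toFinset ∈ G → resolutionMap n r k b' l = coboundary b l := by
  obtain ⟨b', halt, hhom, hres⟩ : ∃ b' : ListCochain R α, IsAlternating b' ∧
      IsHomogeneous (k + 1) b' ∧
      ∀ l : List α, l.toFinset ∈ G → resolutionMap n r k b' l = coboundary b l := by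
    rcases Nat.even_or_odd k with hk | hk
    · exact h.exists_resolutionMap_even_eq hk hb.1.coboundary hb.2.coboundary hb.3
    · exact h.exists_resolutionMap_odd_eq hk hb.1.coboundary hb.2.coboundary hb.3
  refine ⟨b', ⟨halt, hhom, fun l hl => ?_⟩, hres⟩
  have hzero : coboundary (resolutionMap n r k b' - coboundary b) l = 0 :=
    coboundary_eq_zero_of_sublist fun l' hl' => by
      have hmem : l'.toFinset ∈ G := h.subset_mem _ hl _ fun x hx =>
        List.mem_toFinset.2 (hl'.subset (List.mem_toFinset.1 hx))
      rw [Pi.sub_apply, hres l' hmem, sub_self]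
  rwa [map_sub, coboundary_coboundary, sub_zero, ← resolutionMap_coboundary,
    ← resolutionMap_add_two] at hzero

lemma exists_resolution [NeZero n] (h : FreeComplex r G τ) (hR : (n : R) = 0) :
    ∃ b : ℕ → ListCochain R α, b 0 [] = 1 ∧ (∀ k, IsAlternating (b k)) ∧
      (∀ k, IsHomogeneous k (b k)) ∧
      ∀ k (l : List α), l.toFinset ∈ G →
        resolutionMap n r k (b (k + 1)) l = coboundary (b k) l := by
  choose! next hnext hres using
    fun k (b : ListCochain R α) (hb : IsResolvable n r G k b) => h.exists_isResolvable_succ hb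
  let b : ℕ → ListCochain R α := fun k => Nat.rec (fun l => if l = [] then 1 else 0) next k
  have hb (k : ℕ) : IsResolvable n r G k (b k) := by
    induction k with
    | zero => exact isResolvable_zero hR
    | succ k ih => exact hnext k _ ih
  exact ⟨b, if_pos rfl, fun k => (hb k).1, fun k => (hb k).2, fun k => hres k _ (hb k)⟩

/-- The resolution over `G` pulls back along `lab`, and the coboundary of its `k`-th cochain
vanishes for want of simplices with `k + 1` vertices. -/
lemma not_carriesClass_of_labelling [Nontrivial R] [NeZero n] (h : FreeComplex r G τ)
    (hR : (n : R) = 0) {k : ℕ} (hcard : ∀ S ∈ G, S.card ≤ k) {V : Type*} {g : V → V} {X : Set V}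
    (hX : Set.MapsTo g X X) {S : Set (List V)} (hS : ∀ l ∈ S, ∀ x ∈ l, x ∈ X) {lab : V → α}
    (hlab : ∀ x ∈ X, lab (g x) = r (lab x)) (hG : ∀ l ∈ S, (l.map lab).toFinset ∈ G) :
    ¬ CarriesClass R n g k S := by
  rintro ⟨c, hc, -, hclass⟩
  obtain ⟨b, hb0, halt, hhom, hres⟩ := h.exists_resolution hR
  have hiter (j : ℕ) : ∀ x ∈ X, lab (g^[j] x) = r^[j] (lab x) := by
    induction j with
    | zero => simp
    | succ j ih =>
      intro x hx
      rw [Function.iterate_succ_apply, ih _ (hX hx), hlab x hx, Function.iterate_succ_apply]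
  have hmap : ∀ l ∈ S, ∀ j, (l.map g^[j]).map lab = (l.map lab).map r^[j] := by
    intro l hl j
    rw [List.map_map, List.map_map]
    exact List.map_congr_left fun x hx => hiter j x (hS l hl x hx)
  have hone := hclass (fun j => pullback lab (b j)) hb0 fun j _ l hl => by
    rw [resolutionMap_pullback (hmap l hl), hres j _ (hG l hl), ← pullback_coboundary,
      pullback_apply]
  refine one_ne_zero (hone.symm.trans (hc _ fun l hl => ?_))
  rw [← pullback_coboundary, pullback_apply]
  by_cases hlen : (l.map lab).length = k + 1
  · refine (halt k).coboundary.eq_zero_of_not_nodup fun hnodup => ?_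
    have := hcard _ (hG l hl)
    rw [List.toFinset_card_of_nodup hnodup] at this
    lia
  · exact (hhom k).coboundary _ hlen

end FreeComplex

end FreeComplex

section Labels

variable {ι : Type*} {p : ℕ}

/-- Translation by `s` on `ι` copies of `ℤ/p`. -/
def labelShift (s : ZMod p) (q : ι × ZMod p) : ι × ZMod p := (q.1, q.2 + s)

lemma labelShift_labelShift (s t : ZMod p) (q : ι × ZMod p) :
    labelShift s (labelShift t q) = labelShift (t + s) q := by
  simp [labelShift, add_assoc]

lemma labelShift_zero (q : ι × ZMod p) : labelShift 0 q = q := by simp [labelShift]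

variable (ι p) in
/-- The join of `ι` copies of the boundary of the simplex with vertex set `ℤ/p`. -/
def joinBoundary : Set (Finset (ι × ZMod p)) := {S | ∀ j, ∃ i, (j, i) ∉ S}

lemma card_le_of_mem_joinBoundary [Fintype ι] [NeZero p] {S : Finset (ι × ZMod p)}
    (hS : S ∈ joinBoundary ι p) : S.card ≤ Fintype.card ι * (p - 1) := by
  classical
  choose i hi using hS
  have hcompl : Fintype.card ι ≤ Sᶜ.card := by
    rw [← Finset.card_univ,
      ← Finset.card_map ⟨fun j => (j, i j), fun j j' h => congrArg Prod.fst h⟩]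
    refine Finset.card_le_card fun q hq => ?_
    obtain ⟨j, -, rfl⟩ := Finset.mem_map.1 hq
    exact Finset.mem_compl.2 (hi j)
  have hsum := S.card_add_card_compl
  rw [Fintype.card_prod, ZMod.card] at hsum
  rw [Nat.mul_sub_one]
  lia

/-- The part of a set of labels in the copy `j` of `ℤ/p`. -/
noncomputable def labelCopy (j : ι) (S : Finset (ι × ZMod p)) : Finset (ZMod p) :=
  S.preimage (Prod.mk j) (Prod.mk_right_injective j).injOn

lemma mem_labelCopy {j : ι} {S : Finset (ι × ZMod p)} {i : ZMod p} :
    i ∈ labelCopy j S ↔ (j, i) ∈ S := Finset.mem_preimage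

lemma labelCopy_image_labelShift [DecidableEq ι] (j : ι) (S : Finset (ι × ZMod p)) (s : ZMod p) :
    labelCopy j (S.image (labelShift s)) = (labelCopy j S).image (· + s) := by
  ext i
  simp only [mem_labelCopy, Finset.mem_image, labelShift, Prod.mk.injEq, Prod.exists]
  constructor
  · rintro ⟨a, b, h, rfl, rfl⟩
    exact ⟨b, h, rfl⟩
  · rintro ⟨b, h, rfl⟩
    exact ⟨j, b, h, rfl, rfl⟩

/-- The mean of a set of residues, with the junk value `0` when `p` divides the cardinality. -/
def residueMean (S : Finset (ZMod p)) : ZMod p := (∑ i ∈ S, i) * (S.card : ZMod p)⁻¹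

lemma residueMean_image_add [Fact p.Prime] {S : Finset (ZMod p)} (hne : S.Nonempty)
    (huniv : ∃ i, i ∉ S) (s : ZMod p) : residueMean (S.image (· + s)) = residueMean S + s := by
  have hlt : S.card < p := by
    simpa only [ZMod.card] using Finset.card_lt_univ_of_notMem huniv.choose_spec
  have hcard : (S.card : ZMod p) ≠ 0 := fun h =>
    hlt.not_ge (Nat.le_of_dvd hne.card_pos ((ZMod.natCast_eq_zero_iff _ _).1 h))
  have hinj : Function.Injective (fun i : ZMod p => i + s) := add_left_injective s
  rw [residueMean, residueMean, Finset.card_image_of_injective _ hinj,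
    Finset.sum_image hinj.injOn, Finset.sum_add_distrib, Finset.sum_const, nsmul_eq_mul, add_mul,
    mul_right_comm, mul_inv_cancel₀ hcard, one_mul]

variable [DecidableEq ι] [Nonempty ι]

/-- The mean of one nonempty copy of `ℤ/p` in a set of labels. The copy is chosen as a function of
the set of indices of nonempty copies, so that translations do not affect it. -/
noncomputable def labelMean (S : Finset (ι × ZMod p)) : ZMod p :=
  residueMean (labelCopy (Classical.epsilon (· ∈ S.image Prod.fst)) S)

lemma labelMean_image_labelShift [Fact p.Prime] {S : Finset (ι × ZMod p)}
    (hS : S ∈ joinBoundary ι p) (hne : S.Nonempty) (s : ZMod p) :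
    labelMean (S.image (labelShift s)) = labelMean S + s := by
  have hfst : (S.image (labelShift s)).image Prod.fst = S.image Prod.fst := by
    rw [Finset.image_image]
    rfl
  obtain ⟨⟨j, i⟩, hq, hj⟩ := Finset.mem_image.1 (Classical.epsilon_spec (hne.image Prod.fst))
  rw [labelMean, hfst, labelCopy_image_labelShift, labelMean, ← hj]
  exact residueMean_image_add ⟨i, mem_labelCopy.2 hq⟩
    ((hS j).imp fun i' hi' h => hi' (mem_labelCopy.1 h)) s

lemma freeComplex_joinBoundary [Fact p.Prime] :
    FreeComplex (labelShift 1) (joinBoundary ι p) labelMean where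
  image_mem S hS j := by
    obtain ⟨i, hi⟩ := hS j
    refine ⟨i + 1, fun h => hi ?_⟩
    rw [← mem_labelCopy, labelCopy_image_labelShift] at h
    obtain ⟨i', hi', he⟩ := Finset.mem_image.1 h
    rwa [← add_right_cancel he, ← mem_labelCopy]
  subset_mem _ hS _ hT j := (hS j).imp fun _ hi h => hi (hT h)
  equivariant _ hS hne := labelMean_image_labelShift hS hne 1

lemma exists_equivariant_choice [Fact p.Prime] : ∃ e : Finset (ι × ZMod p) → ι × ZMod p,
    ∀ S ∈ joinBoundary ι p, S.Nonempty →
      e S ∈ S ∧ ∀ s, e (S.image (labelShift s)) = labelShift s (e S) := by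
  choose! c hc using fun (S : Finset (ι × ZMod p)) (h : S.Nonempty) => h
  -- Choose within the translate of `S` that has mean zero, and translate back.
  refine ⟨fun S => labelShift (labelMean S) (c (S.image (labelShift (-labelMean S)))),
    fun S hS hne => ⟨?_, fun s => ?_⟩⟩
  · obtain ⟨q, hq, he⟩ := Finset.mem_image.1 (hc _ (hne.image (labelShift (-labelMean S))))
    simp only
    rwa [← he, labelShift_labelShift, neg_add_cancel, labelShift_zero]
  · have himage : (S.image (labelShift s)).image (labelShift (-(labelMean S + s))) =
        S.image (labelShift (-labelMean S)) := by
      rw [Finset.image_image]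
      congr 1
      funext q
      rw [Function.comp_apply, labelShift_labelShift]
      congr 1
      ring
    simp only [labelMean_image_labelShift hS hne, himage, labelShift_labelShift]

end Labels

section BorsukUlam

/-- The ordered simplices with vertices in `X` and pairwise distances less than `δ`. -/
def smallSimplices {V : Type*} [Dist V] (X : Set V) (δ : ℝ) : Set (List V) :=
  {l | (∀ x ∈ l, x ∈ X) ∧ ∀ x ∈ l, ∀ y ∈ l, dist x y < δ}

/-- The set `X` carries the generator of the `k`-th homology of `ℤ/n`, in the sense of Vietoris:
on arbitrarily small simplices. -/
def CarriesSmallClass (R : Type*) [Ring R] (n : ℕ) {V : Type*} [Dist V] (g : V → V) (k : ℕ)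
    (X : Set V) : Prop :=
  ∀ δ > 0, CarriesClass R n g k (smallSimplices X δ)

lemma exists_pos_forall_exists_le {V β : Type*} [TopologicalSpace V] [Finite β] [Nonempty β]
    {X : Set V} (hX : IsCompact X) {u : β → V → ℝ} (hu : ∀ q, ContinuousOn (u q) X)
    (hpos : ∀ x ∈ X, ∃ q, 0 < u q x) : ∃ ε > 0, ∀ x ∈ X, ∃ q, ε ≤ u q x := by
  have := Fintype.ofFinite β
  obtain ⟨ε, hε, h⟩ := hX.exists_forall_le'
    (ContinuousOn.finset_sup'_apply Finset.univ_nonempty fun q _ => hu q)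
    (a := 0) fun x hx => by simpa using hpos x hx
  refine ⟨ε, hε, fun x hx => ?_⟩
  simpa using h x hx

variable {ι V : Type*} {p : ℕ} [Fact p.Prime] {g : V → V} {X : Set V}
  {u : ι × ZMod p → V → ℝ}

lemma exists_equivariant_label [Finite ι] [Nonempty ι] {ε : ℝ} (hε : 0 < ε)
    (hX : ∀ x ∈ X, ∃ q, ε ≤ u q x) (hug : ∀ q, ∀ x ∈ X, u (labelShift 1 q) (g x) = u q x)
    (hsum : ∀ j, ∀ x ∈ X, ∑ i, u (j, i) x = 0) :
    ∃ lab : V → ι × ZMod p, ∀ x ∈ X, ε ≤ u (lab x) x ∧ lab (g x) = labelShift 1 (lab x) := by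
  classical
  have := Fintype.ofFinite ι
  obtain ⟨e, he⟩ := exists_equivariant_choice (ι := ι) (p := p)
  let M (x : V) : Finset (ι × ZMod p) := Finset.univ.filter fun q => ε ≤ u q x
  have hM {x : V} {q : ι × ZMod p} : q ∈ M x ↔ ε ≤ u q x := by simp [M]
  have hMg : ∀ x ∈ X, M (g x) = (M x).image (labelShift 1) := by
    intro x hx
    ext q
    rw [hM, Finset.mem_image]
    constructor
    · intro h
      have hq : labelShift 1 (labelShift (-1) q) = q := by
        rw [labelShift_labelShift, neg_add_cancel, labelShift_zero]
      refine ⟨labelShift (-1) q, hM.2 ?_, hq⟩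
      rwa [← hug _ x hx, hq]
    · rintro ⟨q, hq, rfl⟩
      rw [hug q x hx]
      exact hM.1 hq
  have hMface : ∀ x ∈ X, M x ∈ joinBoundary ι p := by
    intro x hx j
    by_contra! h
    exact (Finset.sum_pos (fun i _ => hε.trans_le (hM.1 (h i))) Finset.univ_nonempty).ne'
      (hsum j x hx)
  refine ⟨fun x => e (M x), fun x hx => ?_⟩
  obtain ⟨hmem, hshift⟩ := he (M x) (hMface x hx) ((hX x hx).imp fun q => hM.2)
  exact ⟨hM.1 hmem, (congrArg e (hMg x hx)).trans (hshift 1)⟩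

theorem exists_zero_of_carriesSmallClass [Fintype ι] [PseudoMetricSpace V] (hX : IsCompact X)
    (hne : X.Nonempty) (hg : Set.MapsTo g X X)
    (hclass : CarriesSmallClass (ZMod p) p g (Fintype.card ι * (p - 1)) X)
    (hu : ∀ q, ContinuousOn (u q) X) (hug : ∀ q, ∀ x ∈ X, u (labelShift 1 q) (g x) = u q x)
    (hsum : ∀ j, ∀ x ∈ X, ∑ i, u (j, i) x = 0) : ∃ x ∈ X, ∀ q, u q x = 0 := by
  classical
  by_contra! hcon
  have : Nonempty ι := hne.elim fun x hx => ⟨(hcon x hx).choose.1⟩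
  obtain ⟨ε, hε, hεX⟩ := exists_pos_forall_exists_le hX hu fun x hx => by
    obtain ⟨⟨j, i⟩, hq⟩ := hcon x hx
    obtain ⟨i', -, hi'⟩ := Finset.exists_pos_of_sum_zero_of_exists_nonzero _ (hsum j x hx)
      ⟨i, Finset.mem_univ i, hq⟩
    exact ⟨(j, i'), hi'⟩
  obtain ⟨lab, hlab⟩ := exists_equivariant_label hε hεX hug hsum
  obtain ⟨δ, hδ, hδX⟩ := Metric.uniformContinuousOn_iff.1
    (hX.uniformContinuousOn_of_continuous (continuousOn_pi.2 hu)) ε hε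
  refine freeComplex_joinBoundary.not_carriesClass_of_labelling (CharP.cast_eq_zero (ZMod p) p)
    (fun S => card_le_of_mem_joinBoundary) hg (fun l hl => hl.1) (fun x hx => (hlab x hx).2)
    (fun l hl j => ?_) (hclass δ hδ)
  -- A small simplex labelled by a whole copy of `ℤ/p` would make all of `u (j, ·)` positive.
  by_contra! h
  have hmem (i : ZMod p) : ∃ x ∈ l, lab x = (j, i) := by simpa using h i
  obtain ⟨x₀, hx₀, -⟩ := hmem 0
  refine (Finset.sum_pos (fun i _ => ?_) Finset.univ_nonempty).ne' (hsum j x₀ (hl.1 x₀ hx₀))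
  obtain ⟨x, hx, hxi⟩ := hmem i
  have hle := (hlab x (hl.1 x hx)).1
  rw [hxi] at hle
  have hclose : |u (j, i) x - u (j, i) x₀| < ε :=
    (dist_le_pi_dist (fun q => u q x) (fun q => u q x₀) (j, i)).trans_lt
      (hδX x (hl.1 x hx) x₀ (hl.1 x₀ hx₀) (hl.2 x hx x₀ hx₀))
  linarith [(abs_lt.1 hclose).2]

end BorsukUlam

section Cone

variable {V : Type*}

section Metric

variable [PseudoMetricSpace V] {X X' : Set V} {δ δ' η : ℝ} {l l' : List V}

lemma smallSimplices_mono (hX : X ⊆ X') (hδ : δ ≤ δ') :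
    smallSimplices X δ ⊆ smallSimplices X' δ' := fun _ hl =>
  ⟨fun x hx => hX (hl.1 x hx), fun x hx y hy => (hl.2 x hx y hy).trans_le hδ⟩

lemma map_mem_smallSimplices {T : V → V} (hT : LipschitzWith 1 T) (hTX : Set.MapsTo T X X')
    (hl : l ∈ smallSimplices X δ) : l.map T ∈ smallSimplices X' δ := by
  refine ⟨List.forall_mem_map.2 fun x hx => hTX (hl.1 x hx), List.forall_mem_map.2 fun x hx =>
    List.forall_mem_map.2 fun y hy => ?_⟩
  simpa using (hT.dist_le_mul x y).trans_lt (by simpa using hl.2 x hx y hy)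

lemma mem_smallSimplices_of_dist_lt {f g : V → V} (hf : LipschitzWith 1 f)
    (hg : LipschitzWith 1 g) (hfX : Set.MapsTo f X X') (hgX : Set.MapsTo g X X')
    (hfg : ∀ x ∈ X, dist (f x) (g x) < η) (hl : l ∈ smallSimplices X δ)
    (hl' : ∀ y ∈ l', ∃ x ∈ l, y = f x ∨ y = g x) : l' ∈ smallSimplices X' (δ + η) := by
  refine ⟨fun y hy => ?_, fun y hy z hz => ?_⟩
  · obtain ⟨x, hx, rfl | rfl⟩ := hl' y hy
    · exact hfX (hl.1 x hx)
    · exact hgX (hl.1 x hx)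
  obtain ⟨x, hx, hyx⟩ := hl' y hy
  obtain ⟨w, hw, hzw⟩ := hl' z hz
  have hxw := hl.2 x hx w hw
  have hf := hf.dist_le_mul x w
  have hg := hg.dist_le_mul x w
  rw [NNReal.coe_one, one_mul] at hf hg
  have hx := hfg x (hl.1 x hx)
  have hw := hfg w (hl.1 w hw)
  have hη := dist_nonneg.trans_lt hx
  rcases hyx with rfl | rfl <;> rcases hzw with rfl | rfl
  · linarith
  · linarith [dist_triangle (f x) (f w) (g w)]
  · linarith [dist_triangle_left (g x) (f w) (f x)]
  · linarith

end Metric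

variable [NormedAddCommGroup V] [NormedSpace ℝ V] {X X' : Set V} {v : V}

lemma lipschitzWith_lineMap_left (v : V) {t : ℝ} (ht : t ∈ Set.Icc (0 : ℝ) 1) :
    LipschitzWith 1 fun x => AffineMap.lineMap x v t := by
  refine LipschitzWith.of_dist_le_mul fun x y => ?_
  have hsub : AffineMap.lineMap x v t - AffineMap.lineMap y v t = (1 - t) • (x - y) := by
    simp only [AffineMap.lineMap_apply_module]
    module
  rw [dist_eq_norm, hsub, norm_smul, Real.norm_of_nonneg (sub_nonneg.2 ht.2), dist_eq_norm]
  exact mul_le_mul_of_nonneg_right (by simpa using ht.1) (norm_nonneg _)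

lemma lineMap_mem_of_convexJoin_subset (hXX' : convexJoin ℝ X {v} ⊆ X') {x : V} (hx : x ∈ X)
    {t : ℝ} (ht : t ∈ Set.Icc (0 : ℝ) 1) : AffineMap.lineMap x v t ∈ X' :=
  hXX' (mem_convexJoin.2 ⟨x, hx, v, rfl,
    segment_eq_image_lineMap ℝ x v ▸ Set.mem_image_of_mem _ ht⟩)

/-- The straight lines to `v` are traversed in `m` steps, each too short to spoil the size of the
simplices. -/
lemma CarriesSmallClass.cone {R : Type*} [Ring R] {n : ℕ} {T : V → V} {k : ℕ}
    (h : CarriesSmallClass R n T k X) (hT : LipschitzWith 1 T) (hTn : T^[n] = id)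
    (hTX : Set.MapsTo T X X) (hX : Bornology.IsBounded X) (hne : X.Nonempty)
    (hXX' : convexJoin ℝ X {v} ⊆ X') : CarriesSmallClass R n T (k + 1) X' := by
  intro δ hδ
  obtain ⟨r, hr, hXr⟩ := hX.subset_ball_lt 0 v
  obtain ⟨m, hm⟩ := exists_nat_gt (r / (δ / 2))
  have hm0 : (0 : ℝ) < m := (by positivity : 0 ≤ r / (δ / 2)).trans_lt hm
  have hline {x : V} (hx : x ∈ X) {t : ℝ} (ht : t ∈ Set.Icc (0 : ℝ) 1) :=
    lineMap_mem_of_convexJoin_subset hXX' hx ht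
  have hXX'₀ : X ⊆ X' := fun x hx => by
    simpa using hline hx (Set.left_mem_Icc.2 zero_le_one)
  have hvX' : v ∈ X' := hne.elim fun x hx => by
    simpa using hline hx (Set.right_mem_Icc.2 zero_le_one)
  let s (t : ℕ) (x : V) : V := AffineMap.lineMap x v ((t : ℝ) / m)
  have hIcc {t : ℕ} (ht : t ≤ m) : (t : ℝ) / m ∈ Set.Icc (0 : ℝ) 1 :=
    ⟨by positivity, div_le_one_of_le₀ (by exact_mod_cast ht) hm0.le⟩
  have hstep (t : ℕ) : ∀ x ∈ X, dist (s t x) (s (t + 1) x) < δ / 2 := by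
    intro x hx
    have hdist : dist ((t : ℝ) / m) (((t + 1 : ℕ) : ℝ) / m) = (m : ℝ)⁻¹ := by
      rw [Real.dist_eq, ← sub_div, abs_div, abs_of_pos hm0]
      simp
    rw [dist_lineMap_lineMap, hdist, inv_mul_lt_iff₀ hm0]
    exact (Metric.mem_ball.1 (hXr hx)).trans ((div_lt_iff₀ (by positivity)).1 hm)
  refine (h (δ / 2) (by positivity)).succ hTn (smallSimplices_mono hXX'₀ (by linarith))
    (fun l hl => map_mem_smallSimplices hT hTX hl) (ListCochain.coneHomotopy v s m)
    (ListCochain.coneHomotopy_coboundary (by ext x; simp [s]) (by ext x; simp [s, hm0.ne']))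
    fun b hb l hl => ListCochain.coneHomotopy_eq_zero (hb _ ?_) fun t ht l' hl' => hb _ ?_
  · have hall : ∀ y ∈ v :: l.map fun _ => v, y = v := by simp
    exact ⟨fun y hy => hall y hy ▸ hvX', fun y hy z hz => by
      rwa [hall y hy, hall z hz, dist_self]⟩
  · rw [← add_halves δ]
    exact mem_smallSimplices_of_dist_lt (lipschitzWith_lineMap_left v (hIcc ht.le))
      (lipschitzWith_lineMap_left v (hIcc ht)) (fun x hx => hline hx (hIcc ht.le))
      (fun x hx => hline hx (hIcc ht)) (hstep t) hl hl'

end Cone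

section ForwardOrbit

variable {V : Type*} {T : V → V} {v : V}

/-- The orbit of `v` under the iterates of `T`. -/
def forwardOrbit (T : V → V) (v : V) : Set V := Set.range fun j : ℕ => T^[j] v

lemma self_mem_forwardOrbit : v ∈ forwardOrbit T v := ⟨0, rfl⟩

lemma mapsTo_forwardOrbit : Set.MapsTo T (forwardOrbit T v) (forwardOrbit T v) := by
  rintro _ ⟨j, rfl⟩
  exact ⟨j + 1, Function.iterate_succ_apply' T j v⟩

lemma finite_forwardOrbit {n : ℕ} (hn : 0 < n) (hT : T^[n] = id) : (forwardOrbit T v).Finite := by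
  have hper : Function.IsPeriodicPt T n v := congrFun hT v
  refine (Set.finite_range fun j : Fin n => T^[j] v).subset ?_
  rintro _ ⟨j, rfl⟩
  exact ⟨⟨j % n, Nat.mod_lt j hn⟩, hper.iterate_mod_apply j⟩

lemma exists_iterate_eq_of_mem_forwardOrbit {n : ℕ} (hn : 0 < n) (hT : T^[n] = id) {w : V}
    (hw : w ∈ forwardOrbit T v) : ∃ i, T^[i] w = v := by
  obtain ⟨j, rfl⟩ := hw
  have hper : Function.IsPeriodicPt T (n * j) v :=
    Function.IsPeriodicPt.mul_const (congrFun hT v) j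
  refine ⟨n * j - j, ?_⟩
  simp only
  rw [← Function.iterate_add_apply, Nat.sub_add_cancel (Nat.le_mul_of_pos_left j hn)]
  exact hper

end ForwardOrbit

section ConvexJoin

variable {V : Type*} [AddCommGroup V] [Module ℝ V]

lemma isCompact_convexJoin [TopologicalSpace V] [ContinuousAdd V] [ContinuousSMul ℝ V]
    {s t : Set V} (hs : IsCompact s) (ht : IsCompact t) : IsCompact (convexJoin ℝ s t) := by
  have himage : convexJoin ℝ s t =
      (fun q : (V × V) × ℝ => (1 - q.2) • q.1.1 + q.2 • q.1.2) '' ((s ×ˢ t) ×ˢ Set.Icc 0 1) := by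
    ext z
    simp only [mem_convexJoin, segment_eq_image, Set.mem_image, Set.mem_prod, Prod.exists]
    grind
  rw [himage]
  exact ((hs.prod ht).prod isCompact_Icc).image (by fun_prop)

lemma mapsTo_convexJoin {T : V →ₗ[ℝ] V} {s t : Set V} (hs : Set.MapsTo T s s)
    (ht : Set.MapsTo T t t) : Set.MapsTo T (convexJoin ℝ s t) (convexJoin ℝ s t) := by
  intro z hz
  obtain ⟨x, hx, y, hy, hz⟩ := mem_convexJoin.1 hz
  exact mem_convexJoin.2 ⟨T x, hs hx, T y, ht hy,
    image_segment ℝ T.toAffineMap x y ▸ Set.mem_image_of_mem T hz⟩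

lemma disjoint_convexJoin_forwardOrbit {T : V →ₗ[ℝ] V} {n : ℕ} (hn : 0 < n) (hT : T^[n] = id)
    {W : Submodule ℝ V} (hTW : Set.MapsTo T W W) {X : Set V} (hTX : Set.MapsTo T X X)
    (hX : Disjoint X W) {v : V} (hv : ∀ x ∈ X, v ∉ W ⊔ Submodule.span ℝ {x}) :
    Disjoint (convexJoin ℝ X (forwardOrbit T v)) W := by
  rw [Set.disjoint_left]
  intro y hy hyW
  obtain ⟨x, hx, w, hw, a, b, -, -, hab, rfl⟩ := mem_convexJoin.1 hy
  rcases eq_or_ne b 0 with rfl | hb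
  · rw [add_zero] at hab
    rw [hab, one_smul, zero_smul, add_zero] at hyW
    exact Set.disjoint_left.1 hX hx hyW
  obtain ⟨i, hi⟩ := exists_iterate_eq_of_mem_forwardOrbit hn hT hw
  have hW : T^[i] (a • x + b • w) ∈ W := hTW.iterate i hyW
  rw [← Module.End.coe_pow, map_add, map_smul, map_smul, Module.End.coe_pow, hi] at hW
  have hbv : b • v ∈ W ⊔ Submodule.span ℝ {T^[i] x} :=
    (Submodule.add_mem_iff_right _ (Submodule.smul_mem _ a
      (Submodule.mem_sup_right (Submodule.mem_span_singleton_self _)))).1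
        (Submodule.mem_sup_left hW)
  exact hv _ (hTX.iterate i hx) ((Submodule.smul_mem_iff _ hb).1 hbv)

end ConvexJoin

section Covering

variable {V : Type*} [AddCommGroup V] [Module ℝ V] {W : Submodule ℝ V} {d : ℕ} {X X' : Set V}

/-- The set `X` is covered by finitely many subspaces of dimension at most `d` containing `W`. -/
def CoveredBySubspaces (W : Submodule ℝ V) (d : ℕ) (X : Set V) : Prop :=
  ∃ 𝓕 : Finset (Submodule ℝ V),
    (∀ U ∈ 𝓕, W ≤ U ∧ Module.finrank ℝ U ≤ d) ∧ ∀ x ∈ X, ∃ U ∈ 𝓕, x ∈ U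

lemma coveredBySubspaces_zero (W : Submodule ℝ V) :
    CoveredBySubspaces W (Module.finrank ℝ W) {0} :=
  ⟨{W}, by simp, by simp⟩

lemma CoveredBySubspaces.mono (h : CoveredBySubspaces W d X') (hX : X ⊆ X') :
    CoveredBySubspaces W d X :=
  h.imp fun _ h𝓕 => ⟨h𝓕.1, fun x hx => h𝓕.2 x (hX hx)⟩

lemma CoveredBySubspaces.exists_notMem (h : CoveredBySubspaces W d X)
    (hd : d < Module.finrank ℝ V) : ∃ v, ∀ x ∈ X, v ∉ W ⊔ Submodule.span ℝ {x} := by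
  obtain ⟨𝓕, h𝓕, hX⟩ := h
  have htop : ⊤ ∉ 𝓕 := fun h => by simpa [hd.not_ge] using (h𝓕 ⊤ h).2
  obtain ⟨v, hv⟩ :=
    (Set.ne_univ_iff_exists_notMem _).1 (Subspace.biUnion_ne_univ_of_top_notMem htop)
  refine ⟨v, fun x hx hvx => hv ?_⟩
  obtain ⟨U, hU, hxU⟩ := hX x hx
  exact Set.mem_biUnion hU
    (sup_le (h𝓕 U hU).1 ((Submodule.span_singleton_le_iff_mem x U).2 hxU) hvx)

lemma finrank_sup_span_singleton_le [FiniteDimensional ℝ V] (U : Submodule ℝ V) (v : V) :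
    Module.finrank ℝ ↥(U ⊔ Submodule.span ℝ {v}) ≤ Module.finrank ℝ U + 1 :=
  (Submodule.finrank_add_le_finrank_add_finrank _ _).trans
    (Nat.add_le_add_left ((finrank_span_le_card _).trans (by simp)) _)

lemma CoveredBySubspaces.convexJoin [FiniteDimensional ℝ V] (h : CoveredBySubspaces W d X)
    {O : Set V} (hO : O.Finite) : CoveredBySubspaces W (d + 1) (convexJoin ℝ X O) := by
  classical
  obtain ⟨𝓕, h𝓕, hX⟩ := h
  refine ⟨Finset.image₂ (fun U w => U ⊔ Submodule.span ℝ {w}) 𝓕 hO.toFinset,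
    Finset.forall_mem_image₂.2 fun U hU w _ => ⟨(h𝓕 U hU).1.trans le_sup_left,
      (finrank_sup_span_singleton_le U w).trans (Nat.add_le_add_right (h𝓕 U hU).2 1)⟩, ?_⟩
  intro z hz
  obtain ⟨x, hx, w, hw, a, b, -, -, -, rfl⟩ := mem_convexJoin.1 hz
  obtain ⟨U, hU, hxU⟩ := hX x hx
  exact ⟨_, Finset.mem_image₂_of_mem hU (hO.mem_toFinset.2 hw), Submodule.add_mem_sup
    (U.smul_mem a hxU) (Submodule.smul_mem _ b (Submodule.mem_span_singleton_self w))⟩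

end Covering

section Carrier

variable {R V : Type*} [Ring R] [NormedAddCommGroup V] [NormedSpace ℝ V] {n : ℕ}
  {T : V →ₗ[ℝ] V} {W : Submodule ℝ V} {k : ℕ} {X : Set V}

variable (R n T W k X) in
/-- A compact `T`-invariant set in the complement of `W` that carries the generator of the `k`-th
homology of `ℤ/n`. It is built as an iterated join of orbits; the covering by subspaces leaves
room for a further orbit in general position. -/
structure IsCarrier : Prop where
  isCompact : IsCompact X
  nonempty : X.Nonempty
  mapsTo : Set.MapsTo T X X
  disjoint : Disjoint X W
  covered : CoveredBySubspaces W (Module.finrank ℝ W + k + 1) X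
  carriesSmallClass : CarriesSmallClass R n T k X

lemma isCarrier_forwardOrbit [FiniteDimensional ℝ V] (hn : 0 < n) (hTn : T^[n] = id)
    (hTW : Set.MapsTo T W W) {v : V} (hv : v ∉ W) : IsCarrier R n T W 0 (forwardOrbit T v) where
  isCompact := (finite_forwardOrbit hn hTn).isCompact
  nonempty := ⟨v, self_mem_forwardOrbit⟩
  mapsTo := mapsTo_forwardOrbit
  disjoint := by
    rw [Set.disjoint_left]
    intro w hw hwW
    obtain ⟨i, rfl⟩ := exists_iterate_eq_of_mem_forwardOrbit hn hTn hw
    exact hv (hTW.iterate i hwW)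
  covered := ((coveredBySubspaces_zero W).convexJoin (finite_forwardOrbit hn hTn)).mono
    (subset_convexJoin_right (Set.singleton_nonempty 0))
  carriesSmallClass δ hδ := carriesClass_zero (x := v)
    ⟨by simp [self_mem_forwardOrbit], by simpa using hδ⟩

lemma IsCarrier.convexJoin [FiniteDimensional ℝ V] (h : IsCarrier R n T W k X) (hn : 0 < n)
    (hTn : T^[n] = id) (hT : LipschitzWith 1 T) (hTW : Set.MapsTo T W W) {v : V}
    (hv : ∀ x ∈ X, v ∉ W ⊔ Submodule.span ℝ {x}) :
    IsCarrier R n T W (k + 1) (convexJoin ℝ X (forwardOrbit T v)) where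
  isCompact := isCompact_convexJoin h.isCompact (finite_forwardOrbit hn hTn).isCompact
  nonempty := h.nonempty.mono (subset_convexJoin_left ⟨v, self_mem_forwardOrbit⟩)
  mapsTo := mapsTo_convexJoin h.mapsTo mapsTo_forwardOrbit
  disjoint := disjoint_convexJoin_forwardOrbit hn hTn hTW h.mapsTo h.disjoint hv
  covered := h.covered.convexJoin (finite_forwardOrbit hn hTn)
  carriesSmallClass := h.carriesSmallClass.cone hT hTn h.mapsTo h.isCompact.isBounded h.nonempty
    (convexJoin_mono_right (Set.singleton_subset_iff.2 self_mem_forwardOrbit))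

theorem exists_isCarrier (hn : 0 < n) (hTn : T^[n] = id)
    (hT : LipschitzWith 1 T) (hTW : Set.MapsTo T W W)
    (hk : Module.finrank ℝ W + k < Module.finrank ℝ V) : ∃ X, IsCarrier R n T W k X := by
  have : FiniteDimensional ℝ V := Module.finite_of_finrank_pos (Nat.zero_lt_of_lt hk)
  induction k with
  | zero =>
    obtain ⟨v, hv⟩ := (coveredBySubspaces_zero W).exists_notMem hk
    exact ⟨_, isCarrier_forwardOrbit hn hTn hTW fun h => hv 0 rfl (Submodule.mem_sup_left h)⟩
  | succ k ih =>
    obtain ⟨X, hX⟩ := ih (by lia)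
    obtain ⟨v, hv⟩ := hX.covered.exists_notMem hk
    exact ⟨_, hX.convexJoin hn hTn hT hTW hv⟩

end Carrier

section CyclicConfigurations

variable {E : Type*} {p : ℕ}

section CyclicShift

variable [AddCommGroup E] [Module ℝ E]

variable (E p) in
/-- The rotation `(x i)ᵢ ↦ (x (i - 1))ᵢ` of cyclic `p`-tuples. -/
def cyclicShift : (ZMod p → E) →ₗ[ℝ] (ZMod p → E) := LinearMap.funLeft ℝ E fun i => i - 1

lemma cyclicShift_apply (x : ZMod p → E) (i : ZMod p) : cyclicShift E p x i = x (i - 1) := rfl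

lemma cyclicShift_iterate_apply (j : ℕ) (x : ZMod p → E) (i : ZMod p) :
    (cyclicShift E p)^[j] x i = x (i - j) := by
  induction j generalizing x with
  | zero => simp
  | succ j ih =>
    rw [Function.iterate_succ_apply, ih, cyclicShift_apply, Nat.cast_succ, sub_sub]

lemma cyclicShift_iterate_self : (cyclicShift E p)^[p] = id := by
  ext x i
  simp [cyclicShift_iterate_apply]

variable (E p) in
/-- The subspace of constant `p`-tuples. -/
def constantTuples : Submodule ℝ (ZMod p → E) :=
  LinearMap.range (LinearMap.const : E →ₗ[ℝ] (ZMod p → E))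

lemma const_mem_constantTuples (e : E) : (fun _ => e) ∈ constantTuples E p := ⟨e, rfl⟩

lemma mapsTo_cyclicShift_constantTuples :
    Set.MapsTo (cyclicShift E p) (constantTuples E p) (constantTuples E p) := by
  rintro _ ⟨e, rfl⟩
  exact ⟨e, rfl⟩

lemma finrank_constantTuples :
    Module.finrank ℝ (constantTuples E p) = Module.finrank ℝ E :=
  LinearMap.finrank_range_of_inj fun _ _ h => congrFun h 0

end CyclicShift

lemma lipschitzWith_cyclicShift [NeZero p] [NormedAddCommGroup E] [NormedSpace ℝ E] :
    LipschitzWith 1 (cyclicShift E p) :=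
  LipschitzWith.of_dist_le_mul fun x y => by
    rw [NNReal.coe_one, one_mul]
    exact (dist_pi_le_iff dist_nonneg).2 fun i => dist_le_pi_dist x y (i - 1)

theorem exists_forall_rotation_eq [NormedAddCommGroup E] [NormedSpace ℝ E] [Fact p.Prime]
    {ι : Type*} [Fintype ι] (hι : Fintype.card ι < Module.finrank ℝ E)
    {d : ι → (ZMod p → E) → ℝ} (hd : ∀ j, Continuous (d j)) :
    ∃ x, x ∉ constantTuples E p ∧ ∀ j, ∃ c, ∀ i, d j (fun k => x (i + k)) = c := by
  have hfin : FiniteDimensional ℝ E := Module.finite_of_finrank_pos (Nat.zero_lt_of_lt hι)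
  have hp : 1 ≤ p := NeZero.one_le
  obtain ⟨X, hX⟩ : ∃ X, IsCarrier (ZMod p) p (cyclicShift E p) (constantTuples E p)
      (Fintype.card ι * (p - 1)) X := by
    refine exists_isCarrier hp cyclicShift_iterate_self lipschitzWith_cyclicShift
      mapsTo_cyclicShift_constantTuples ?_
    rw [finrank_constantTuples, Module.finrank_pi_fintype, Finset.sum_const, Finset.card_univ,
      ZMod.card, smul_eq_mul]
    calc Module.finrank ℝ E + Fintype.card ι * (p - 1)
        < Module.finrank ℝ E + Module.finrank ℝ E * (p - 1) :=
          Nat.add_lt_add_left (Nat.mul_lt_mul_of_pos_right hι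
            (Nat.sub_pos_of_lt (Fact.out : p.Prime).one_lt)) _
      _ = p * Module.finrank ℝ E := by
          rw [← mul_one_add, Nat.add_sub_cancel' hp, Nat.mul_comm]
  have hp₀ : (p : ℝ) ≠ 0 := Nat.cast_ne_zero.2 (NeZero.ne p)
  let D (j : ι) (i : ZMod p) (x : ZMod p → E) : ℝ := d j fun k => x (i + k)
  have hD (j : ι) (i : ZMod p) : Continuous (D j i) := (hd j).comp (by fun_prop)
  have hDT (j : ι) (i : ZMod p) (x : ZMod p → E) : D j (i + 1) (cyclicShift E p x) = D j i x := by
    simp only [D, cyclicShift_apply, add_right_comm i 1, add_sub_cancel_right]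
  have hDsum (j : ι) (x : ZMod p → E) : ∑ i, D j i (cyclicShift E p x) = ∑ i, D j i x := by
    rw [← Equiv.sum_comp (Equiv.addRight (1 : ZMod p))]
    exact Finset.sum_congr rfl fun i _ => hDT j i x
  obtain ⟨x, hx, hzero⟩ := exists_zero_of_carriesSmallClass hX.isCompact hX.nonempty hX.mapsTo
    hX.carriesSmallClass (u := fun q x => D q.1 q.2 x - (∑ i, D q.1 i x) / p)
    (fun q => by
      have := hD q.1
      fun_prop)
    (fun q x _ => by simp only [labelShift, hDT, hDsum])
    (fun j x _ => by
      simp only [Finset.sum_sub_distrib, Finset.sum_const, Finset.card_univ, ZMod.card,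
        nsmul_eq_mul, mul_div_cancel₀ _ hp₀, sub_self])
  exact ⟨x, Set.disjoint_left.1 hX.disjoint hx,
    fun j => ⟨(∑ i, D j i x) / p, fun i => sub_eq_zero.1 (hzero (j, i))⟩⟩

lemma apply_eq_apply_of_periodic [Fact p.Prime] {x : ZMod p → E} {s : ZMod p}
    (hx : Function.Periodic x s) (hs : s ≠ 0) (i i' : ZMod p) : x i = x i' := by
  have h := hx.nat_mul ((i - i') * s⁻¹).val i'
  rw [ZMod.natCast_zmod_val, inv_mul_cancel_right₀ hs, add_sub_cancel] at h
  exact h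

theorem exists_injective_polygon [NormedAddCommGroup E] [NormedSpace ℝ E] [Fact p.Prime]
    {ι : Type*} [Fintype ι] (hι : Fintype.card ι < Module.finrank ℝ E) {s : ι → ZMod p}
    (hs : ∀ t ≠ 0, ∃ j, t = s j ∨ t = -s j) {ρ : ι → E → E → ℝ}
    (hρ : ∀ j, Continuous fun q : E × E => ρ j q.1 q.2) (hρ₀ : ∀ j x y, ρ j x y = 0 ↔ x = y) :
    ∃ x : ZMod p → E, Function.Injective x ∧ ∀ j, ∃ c, ∀ i, ρ j (x i) (x (i + s j)) = c := by
  obtain ⟨x, hx, hc⟩ := exists_forall_rotation_eq hι (d := fun j x => ρ j (x 0) (x (s j)))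
    fun j => (hρ j).comp (by fun_prop : Continuous fun x : ZMod p → E => (x 0, x (s j)))
  simp only [add_zero] at hc
  refine ⟨x, ?_, hc⟩
  -- One degenerate side makes all sides of its kind degenerate, hence the polygon constant.
  have hside (j : ι) (hj : s j ≠ 0) (i : ZMod p) : x i ≠ x (i + s j) := by
    intro hi
    obtain ⟨c, hc⟩ := hc j
    have hper : Function.Periodic x (s j) := fun i' =>
      ((hρ₀ j _ _).1 ((hc i').trans ((hc i).symm.trans ((hρ₀ j _ _).2 hi)))).symm
    refine hx ?_
    rw [show x = fun _ => x 0 from funext fun i' => apply_eq_apply_of_periodic hper hj i' 0]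
    exact const_mem_constantTuples (x 0)
  intro i i' hii'
  by_contra hne
  obtain ⟨j, hj⟩ := hs (i' - i) (sub_ne_zero.2 (Ne.symm hne))
  have hj0 : s j ≠ 0 := by
    rintro h0
    exact hne (by simpa [h0, sub_eq_zero, eq_comm] using hj)
  rcases hj with hj | hj
  · exact hside j hj0 i (by rwa [← hj, add_sub_cancel])
  · exact hside j hj0 i' (by rw [← neg_eq_iff_eq_neg.2 hj, neg_sub, add_sub_cancel, hii'])

end CyclicConfigurations

lemma IsMetricEquivToStd.continuous {E : Type*} [TopologicalSpace E] {ρ : E → E → ℝ}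
    (h : IsMetricEquivToStd ρ) : Continuous fun q : E × E => ρ q.1 q.2 := by
  obtain ⟨hsymm, hzero, htri, hopen⟩ := h
  let := PseudoMetricSpace.ofDistTopology ρ (fun x => (hzero x x).2 rfl) hsymm htri hopen
  exact continuous_dist

lemma exists_continuous_injective_sphere :
    ∃ g : EuclideanSpace ℝ (Fin 3) → Metric.sphere (0 : EuclideanSpace ℝ (Fin 4)) 1,
      Continuous g ∧ Function.Injective g := by
  have : Fact (Module.finrank ℝ (EuclideanSpace ℝ (Fin 4)) = 3 + 1) := ⟨by simp⟩
  let e := (stereographic' 3 (⟨EuclideanSpace.single 0 1, by simp⟩ :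
    Metric.sphere (0 : EuclideanSpace ℝ (Fin 4)) 1)).symm
  have he : e.source = Set.univ := by simp [e]
  exact ⟨e, continuousOn_univ.1 (he ▸ e.continuousOn), Set.injOn_univ.1 (he ▸ e.injOn)⟩

instance fact_prime_five : Fact (Nat.Prime 5) := ⟨Nat.prime_five⟩

theorem pentagon_on_deformed_three_sphere_general {M Y : Type*} [TopologicalSpace M]
    [TopologicalSpace Y]
    (hM : ∃ g : EuclideanSpace ℝ (Fin 3) → M, Continuous g ∧ Function.Injective g)
    (f : M → Y) (hf : Continuous f) (hfinj : Function.Injective f) (ρ₁ ρ₂ : Y → Y → ℝ)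
    (hρ₁ : Continuous fun q : Y × Y => ρ₁ q.1 q.2) (hρ₂ : Continuous fun q : Y × Y => ρ₂ q.1 q.2)
    (hzero₁ : ∀ x y, ρ₁ x y = 0 ↔ x = y) (hzero₂ : ∀ x y, ρ₂ x y = 0 ↔ x = y) :
    ∃ x₀ x₁ x₂ x₃ x₄ : M,
      x₀ ≠ x₁ ∧ x₀ ≠ x₂ ∧ x₀ ≠ x₃ ∧ x₀ ≠ x₄ ∧
      x₁ ≠ x₂ ∧ x₁ ≠ x₃ ∧ x₁ ≠ x₄ ∧ x₂ ≠ x₃ ∧ x₂ ≠ x₄ ∧ x₃ ≠ x₄ ∧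
      (ρ₁ (f x₀) (f x₁) = ρ₁ (f x₁) (f x₂) ∧ ρ₁ (f x₁) (f x₂) = ρ₁ (f x₂) (f x₃) ∧
        ρ₁ (f x₂) (f x₃) = ρ₁ (f x₃) (f x₄) ∧ ρ₁ (f x₃) (f x₄) = ρ₁ (f x₄) (f x₀)) ∧
      (ρ₂ (f x₀) (f x₂) = ρ₂ (f x₂) (f x₄) ∧ ρ₂ (f x₂) (f x₄) = ρ₂ (f x₄) (f x₁) ∧
        ρ₂ (f x₄) (f x₁) = ρ₂ (f x₁) (f x₃) ∧ ρ₂ (f x₁) (f x₃) = ρ₂ (f x₃) (f x₀)) := by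
  obtain ⟨g, hg, hginj⟩ := hM
  have hρ : ∀ j, Continuous fun q : Y × Y => (![ρ₁, ρ₂] j) q.1 q.2 :=
    Fin.forall_fin_two.2 ⟨hρ₁, hρ₂⟩
  have hzero : ∀ j x y, (![ρ₁, ρ₂] j) x y = 0 ↔ x = y := Fin.forall_fin_two.2 ⟨hzero₁, hzero₂⟩
  obtain ⟨x, hx, hc⟩ := exists_injective_polygon (p := 5) (s := ![1, 2])
    (ρ := fun j x y => (![ρ₁, ρ₂] j) (f (g x)) (f (g y))) (by simp) (by decide)
    (fun j => (hρ j).comp (by fun_prop : Continuous fun q : _ × _ => (f (g q.1), f (g q.2))))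
    fun j x y => (hzero j _ _).trans (hfinj.comp hginj).eq_iff
  obtain ⟨⟨c₁, hc₁⟩, ⟨c₂, hc₂⟩⟩ := Fin.forall_fin_two.1 hc
  have hne {i j : ZMod 5} (hij : i ≠ j) : g (x i) ≠ g (x j) := (hginj.comp hx).ne hij
  exact ⟨g (x 0), g (x 1), g (x 2), g (x 3), g (x 4), hne (by decide), hne (by decide),
    hne (by decide), hne (by decide), hne (by decide), hne (by decide), hne (by decide),
    hne (by decide), hne (by decide), hne (by decide),
    ⟨(hc₁ 0).trans (hc₁ 1).symm, (hc₁ 1).trans (hc₁ 2).symm, (hc₁ 2).trans (hc₁ 3).symm,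
      (hc₁ 3).trans (hc₁ 4).symm⟩,
    (hc₂ 0).trans (hc₂ 2).symm, (hc₂ 2).trans (hc₂ 4).symm, (hc₂ 4).trans (hc₂ 1).symm,
    (hc₂ 1).trans (hc₂ 3).symm⟩

/-- The pair `(3, 5)` is admissible: for every continuous injective `f : S³ → ℝ⁴` and
metrics `ρ₁, ρ₂` equivalent to the Euclidean metric there are five distinct points of
`S³` whose images form a `ρ₁`-equilateral pentagon `C₁` and a `ρ₂`-equilateral
pentagon `C₂`. -/
theorem pentagon_on_deformed_three_sphere
    (f : Metric.sphere (0 : EuclideanSpace ℝ (Fin 4)) 1 → EuclideanSpace ℝ (Fin 4))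
    (hf : Continuous f) (hfinj : Function.Injective f)
    (ρ₁ ρ₂ : EuclideanSpace ℝ (Fin 4) → EuclideanSpace ℝ (Fin 4) → ℝ)
    (hρ₁ : IsMetricEquivToStd ρ₁) (hρ₂ : IsMetricEquivToStd ρ₂) :
    ∃ x₀ x₁ x₂ x₃ x₄ : Metric.sphere (0 : EuclideanSpace ℝ (Fin 4)) 1,
      x₀ ≠ x₁ ∧ x₀ ≠ x₂ ∧ x₀ ≠ x₃ ∧ x₀ ≠ x₄ ∧
      x₁ ≠ x₂ ∧ x₁ ≠ x₃ ∧ x₁ ≠ x₄ ∧ x₂ ≠ x₃ ∧ x₂ ≠ x₄ ∧ x₃ ≠ x₄ ∧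
      (ρ₁ (f x₀) (f x₁) = ρ₁ (f x₁) (f x₂) ∧ ρ₁ (f x₁) (f x₂) = ρ₁ (f x₂) (f x₃) ∧
        ρ₁ (f x₂) (f x₃) = ρ₁ (f x₃) (f x₄) ∧ ρ₁ (f x₃) (f x₄) = ρ₁ (f x₄) (f x₀)) ∧
      (ρ₂ (f x₀) (f x₂) = ρ₂ (f x₂) (f x₄) ∧ ρ₂ (f x₂) (f x₄) = ρ₂ (f x₄) (f x₁) ∧
        ρ₂ (f x₄) (f x₁) = ρ₂ (f x₁) (f x₃) ∧ ρ₂ (f x₁) (f x₃) = ρ₂ (f x₃) (f x₀)) :=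
  pentagon_on_deformed_three_sphere_general exists_continuous_injective_sphere f hf hfinj ρ₁ ρ₂
    hρ₁.continuous hρ₂.continuous hρ₁.2.1 hρ₂.2.1
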